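/- arXiv:2305.14636 — 2 statements merged into one kernel-verified Lean document; each statement's English description precedes it below -/
import Mathlib

section
/- Let Γ be a distance-regular graph of diameter D ≥ 2 and valency k, with distinct adjacency eigenvalues k = θ_0 > θ_1 > ⋯ > θ_D. Suppose θ ≠ k is an eigenvalue of the adjacency matrix of Γ of classical q-type for some nonzero real number q. Then θ = θ_1 (the second largest distinct eigenvalue, i.e., the maximum of the adjacency eigenvalues different from k) if and only if q > 0. -/
/-- `G` is a distance-regular graph of diameter `D` with intersection numbers
`p h i j = p^h_{ij}`: for any two vertices `x, y` at distance `h`, the number of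
vertices `z` with `d(x,z) = i` and `d(y,z) = j` equals `p h i j`. -/
structure IsDRG {V : Type*} [Fintype V] (G : SimpleGraph V) (D : ℕ)
    (p : ℕ → ℕ → ℕ → ℕ) : Prop where
  connected : G.Connected
  dist_le : ∀ x y : V, G.dist x y ≤ D
  exists_dist_eq : ∃ x y : V, G.dist x y = D
  inter : ∀ h i j : ℕ, h ≤ D → i ≤ D → j ≤ D → ∀ x y : V, G.dist x y = h →
    {z : V | G.dist x z = i ∧ G.dist y z = j}.ncard = p h i j

/-- `u` is the standard sequence of `θ` for a distance-regular graph with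
intersection numbers `p` (so valency `k = b₀ = p 0 1 1`, `cᵢ = p i 1 (i-1)`,
`aᵢ = p i 1 i`, `bᵢ = p i 1 (i+1)`). -/
def IsStdSeq (D : ℕ) (p : ℕ → ℕ → ℕ → ℕ) (θ : ℝ) (u : ℕ → ℝ) : Prop :=
  u 0 = 1 ∧ u 1 = θ / (p 0 1 1 : ℝ) ∧
    ∀ i : ℕ, 1 ≤ i → i ≤ D - 1 →
      (p i 1 (i - 1) : ℝ) * u (i - 1) + (p i 1 i : ℝ) * u i
          + (p i 1 (i + 1) : ℝ) * u (i + 1) = θ * u i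

/-- The sequence `u` (a standard sequence) is of classical `q`-type:
`u i = (1/q) * u (i-1) + c` for `i = 1, …, D`, for some real `c`. -/
def IsClassicalQType (D : ℕ) (q : ℝ) (u : ℕ → ℝ) : Prop :=
  ∃ c : ℝ, ∀ i : ℕ, 1 ≤ i → i ≤ D → u i = (1 / q) * u (i - 1) + c

/-- `θ` is an eigenvalue of the adjacency matrix of `G`. -/
def IsAdjEigenval {V : Type*} [Fintype V] (G : SimpleGraph V) [DecidableRel G.Adj]
    (θ : ℝ) : Prop :=
  ∃ v : V → ℝ, v ≠ 0 ∧ (G.adjMatrix ℝ).mulVec v = θ • v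

/-!
Radial eigenvectors of a distance-regular graph are governed by a tridiagonal operator with constant
row sum `k`. The consecutive differences of such an eigenvector are an eigenvector, for the same
eigenvalue, of a tridiagonal operator with nonnegative off-diagonal entries. The standard sequence
of an eigenvalue of classical `q`-type has differences proportional to `(1/q)^i`. If `q > 0` these
form a positive eigenvector up to scaling, so by Perron's argument no eigenvalue other than `k`
exceeds `θ`. If `q < 0`, the first row of the difference equation gives `1 + θ = b₁/q < 0`, whereas
the largest eigenvalue `θ₁` other than `k` is at least `-1`: if `θ₁ < -1`, then no term of the sum
`∑ (k - λ)(λ - θ₁)` over the spectrum is positive, but `tr A = 0` and `tr A² = k|V|` give it the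
value `k|V|(-1 - θ₁) > 0`.
-/

open Finset

section ThreeTerm

variable {R : Type*} [CommRing R]

/-- The tridiagonal operator on sequences with subdiagonal `c`, diagonal `a` and superdiagonal `b`.
Since `0 - 1 = 0` in `ℕ`, row `0` is the expected one only when `c 0 = 0`. -/
def threeTerm (c a b : ℕ → R) : (ℕ → R) →ₗ[R] (ℕ → R) where
  toFun w i := c i * w (i - 1) + a i * w i + b i * w (i + 1)
  map_add' v w := by ext i; simp only [Pi.add_apply]; ring
  map_smul' r w := by ext i; simp only [Pi.smul_apply, smul_eq_mul, RingHom.id_apply]; ring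

theorem threeTerm_apply (c a b w : ℕ → R) (i : ℕ) :
    threeTerm c a b w i = c i * w (i - 1) + a i * w i + b i * w (i + 1) :=
  rfl

variable {c a b : ℕ → R} {D : ℕ}

theorem eq_zero_of_threeTerm_eq [NoZeroDivisors R] {w : ℕ → R} {θ : R} (hb : ∀ i < D, b i ≠ 0)
    (hw : ∀ i < D, threeTerm c a b w i = θ * w i) (hw0 : w 0 = 0) : ∀ i ≤ D, w i = 0 := by
  intro i
  induction i using Nat.strong_induction_on with
  | _ i ih =>
    intro hi
    rcases i with _ | i
    · exact hw0
    · have hprev : w (i - 1) = 0 := ih _ (by omega) (by omega)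
      have hcur : w i = 0 := ih _ (by omega) (by omega)
      have hrow := hw i hi
      rw [threeTerm_apply, hprev, hcur, mul_zero, mul_zero, mul_zero, zero_add, zero_add] at hrow
      exact (mul_eq_zero.1 hrow).resolve_left (hb i hi)

theorem threeTerm_eq_of_exists_eigenvector [NoZeroDivisors R] {u : ℕ → R} {θ : R}
    (hb : ∀ i < D, b i ≠ 0) (hbD : b D = 0) (hu : ∀ i < D, threeTerm c a b u i = θ * u i)
    (hθ : ∃ w : ℕ → R, (∃ i ≤ D, w i ≠ 0) ∧ ∀ i ≤ D, threeTerm c a b w i = θ * w i) :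
    ∀ i ≤ D, threeTerm c a b u i = θ * u i := by
  obtain ⟨w, ⟨j, hj, hwj⟩, hw⟩ := hθ
  have hw0 : w 0 ≠ 0 := fun h => hwj (eq_zero_of_threeTerm_eq hb (fun i hi => hw i hi.le) h j hj)
  have hprop : ∀ i ≤ D, (w 0 • u - u 0 • w) i = 0 := by
    refine eq_zero_of_threeTerm_eq (c := c) (a := a) (θ := θ) hb (fun i hi => ?_) ?_
    · simp only [map_sub, map_smul, Pi.sub_apply, Pi.smul_apply, smul_eq_mul, hu i hi, hw i hi.le]
      ring
    · simp only [Pi.sub_apply, Pi.smul_apply, smul_eq_mul]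
      ring
  intro i hi
  rcases hi.lt_or_eq with hlt | rfl
  · exact hu i hlt
  · have hlast : threeTerm c a b (w 0 • u - u 0 • w) i = 0 := by
      rw [threeTerm_apply, hprop _ (Nat.sub_le i 1), hprop i le_rfl, hbD]
      ring
    have hprop_last := hprop i le_rfl
    simp only [map_sub, map_smul, Pi.sub_apply, Pi.smul_apply, smul_eq_mul, hw i le_rfl]
      at hlast hprop_last
    refine mul_left_cancel₀ hw0 ?_
    linear_combination hlast - θ * hprop_last

theorem threeTerm_sub_succ {k : R} (hc0 : c 0 = 0) {i : ℕ} (hi : c i + a i + b i = k)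
    (hi' : c (i + 1) + a (i + 1) + b (i + 1) = k) (w : ℕ → R) :
    threeTerm c (fun j => k - b j - c (j + 1)) (fun j => b (j + 1)) (fun j => w j - w (j + 1)) i =
      threeTerm c a b w i - threeTerm c a b w (i + 1) := by
  simp only [threeTerm_apply, Nat.add_sub_cancel]
  rcases i with _ | i
  · simp only [hc0] at hi ⊢
    linear_combination w 1 * hi' - w 0 * hi
  · simp only [Nat.add_sub_cancel]
    linear_combination w (i + 1 + 1) * hi' - w (i + 1) * hi

end ThreeTerm

section Perron

variable {K : Type*} [Field K] [LinearOrder K] [IsStrictOrderedRing K]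
  {c a b : ℕ → K} {D : ℕ} {θ η : K}

theorem le_of_threeTerm_eq_of_pos {d e : ℕ → K} (hc : ∀ i < D, 0 ≤ c i) (hb : ∀ i < D, 0 ≤ b i)
    (hlast : ∀ i, i + 1 = D → b i = 0) (hd : ∀ i < D, 0 < d i)
    (hdθ : ∀ i < D, threeTerm c a b d i = θ * d i) (heη : ∀ i < D, threeTerm c a b e i = η * e i)
    (he : ∃ i < D, e i ≠ 0) : η ≤ θ := by
  obtain ⟨l, hl, hel⟩ := he
  obtain ⟨i, hi, hmax⟩ :=
    exists_max_image (range D) (fun j => |e j| / d j) ⟨l, mem_range.2 hl⟩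
  replace hi := mem_range.1 hi
  obtain ⟨r, hr⟩ : ∃ r, |e i| / d i = r := ⟨_, rfl⟩
  rw [hr] at hmax
  have hbound : ∀ j < D, |e j| ≤ r * d j := fun j hj =>
    (div_le_iff₀ (hd j hj)).1 (hmax j (mem_range.2 hj))
  have hr_pos : 0 < r := (div_pos (abs_pos.2 hel) (hd l hl)).trans_le (hmax l (mem_range.2 hl))
  have hei : |e i| = r * d i := (div_eq_iff (hd i hi).ne').1 hr
  have hsub : c i * |e (i - 1)| ≤ c i * (r * d (i - 1)) :=
    mul_le_mul_of_nonneg_left (hbound _ (by omega)) (hc i hi)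
  have hsup : b i * |e (i + 1)| ≤ b i * (r * d (i + 1)) := by
    rcases (show i + 1 ≤ D from hi).eq_or_lt with h | h
    · simp [hlast i h]
    · exact mul_le_mul_of_nonneg_left (hbound _ h) (hb i hi)
  have hrow_e : (η - a i) * e i = c i * e (i - 1) + b i * e (i + 1) := by
    linear_combination threeTerm_apply c a b e i - heη i hi
  have hrow_d : (θ - a i) * d i = c i * d (i - 1) + b i * d (i + 1) := by
    linear_combination threeTerm_apply c a b d i - hdθ i hi
  have hle : (η - a i) * |e i| ≤ (θ - a i) * |e i| :=
    calc (η - a i) * |e i| ≤ |(η - a i) * e i| := by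
          rw [abs_mul]; exact mul_le_mul_of_nonneg_right (le_abs_self _) (abs_nonneg _)
      _ ≤ |c i * e (i - 1)| + |b i * e (i + 1)| := hrow_e ▸ abs_add_le _ _
      _ = c i * |e (i - 1)| + b i * |e (i + 1)| := by
          rw [abs_mul, abs_mul, abs_of_nonneg (hc i hi), abs_of_nonneg (hb i hi)]
      _ ≤ c i * (r * d (i - 1)) + b i * (r * d (i + 1)) := add_le_add hsub hsup
      _ = (θ - a i) * |e i| := by
          rw [hei]; linear_combination -r * hrow_d
  have hpos : 0 < |e i| := hei ▸ mul_pos hr_pos (hd i hi)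
  exact (sub_le_sub_iff_right _).1 (le_of_mul_le_mul_right hle hpos)

theorem le_of_threeTerm_eq_of_strictAnti {k : K} {u w : ℕ → K} (hD : 0 < D)
    (hc : ∀ i, 0 ≤ c i) (hb : ∀ i, 0 ≤ b i) (hc0 : c 0 = 0) (hbD : b D = 0)
    (hsum : ∀ i ≤ D, c i + a i + b i = k)
    (huθ : ∀ i ≤ D, threeTerm c a b u i = θ * u i) (hu : ∀ i < D, u (i + 1) < u i)
    (hwη : ∀ i ≤ D, threeTerm c a b w i = η * w i) (hw : ∃ i ≤ D, w i ≠ 0) (hηk : η ≠ k) :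
    η ≤ θ := by
  have hdiff : ∀ {μ : K} {v : ℕ → K}, (∀ i ≤ D, threeTerm c a b v i = μ * v i) → ∀ i < D,
      threeTerm c (fun j => k - b j - c (j + 1)) (fun j => b (j + 1))
        (fun j => v j - v (j + 1)) i = μ * (v i - v (i + 1)) := fun hv i hi => by
    rw [threeTerm_sub_succ hc0 (hsum i hi.le) (hsum (i + 1) hi), hv i hi.le, hv (i + 1) hi, mul_sub]
  refine le_of_threeTerm_eq_of_pos (fun i _ => hc i) (fun i _ => hb _) ?_
    (fun i hi => sub_pos.2 (hu i hi)) (hdiff huθ) (hdiff hwη) ?_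
  · rintro i rfl
    exact hbD
  · by_contra! hstep
    have hconst : ∀ i ≤ D, w i = w 0 := by
      intro i
      induction i with
      | zero => exact fun _ => rfl
      | succ i ih => exact fun hi => (sub_eq_zero.1 (hstep i hi)).symm.trans (ih (by omega))
    obtain ⟨i, hi, hwi⟩ := hw
    have hrow := hwη 0 hD.le
    rw [threeTerm_apply, hconst (0 + 1) hD, Nat.zero_sub, ← add_mul, ← add_mul,
      hsum 0 hD.le] at hrow
    exact hηk (mul_right_cancel₀ (hconst i hi ▸ hwi) hrow).symm

end Perron

section Spectrum

open Matrix

theorem exists_mulVec_eq_smul_of_vecMul_eq_smul {n K : Type*} [Fintype n] [Field K]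
    {M : Matrix n n K} {μ : K} {v : n → K} (hv : v ≠ 0) (hvM : v ᵥ* M = μ • v) :
    ∃ w ≠ 0, M *ᵥ w = μ • w := by
  classical
  have hker : v ᵥ* (M - μ • 1) = 0 := by
    rw [vecMul_sub, vecMul_smul, vecMul_one, hvM, sub_self]
  obtain ⟨w, hw, hwM⟩ :=
    exists_mulVec_eq_zero_iff.2 (exists_vecMul_eq_zero_iff.1 ⟨v, hv, hker⟩)
  rw [sub_mulVec, smul_mulVec, one_mulVec, sub_eq_zero] at hwM
  exact ⟨w, hw, hwM⟩

theorem trace_pow_eq_sum_eigenvalues_pow {n 𝕜 : Type*} [RCLike 𝕜] [Fintype n] [DecidableEq n]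
    {A : Matrix n n 𝕜} (hA : A.IsHermitian) (m : ℕ) :
    (A ^ m).trace = ∑ i, (hA.eigenvalues i : 𝕜) ^ m := by
  conv_lhs => rw [hA.spectral_theorem, ← map_pow, diagonal_pow, Unitary.conjStarAlgAut_apply,
    trace_mul_cycle, Unitary.coe_star_mul_self, one_mul, trace_diagonal]
  rfl

variable {V : Type*} [Fintype V] {G : SimpleGraph V} [DecidableRel G.Adj]

theorem isAdjEigenval_eigenvalues [DecidableEq V] (i : V) :
    IsAdjEigenval G ((G.isHermitian_adjMatrix ℝ).eigenvalues i) := by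
  have hA := G.isHermitian_adjMatrix ℝ
  refine ⟨_, fun h => ?_, hA.mulVec_eigenvectorBasis i⟩
  exact hA.eigenvectorBasis.orthonormal.ne_zero i (WithLp.ofLp_injective 2 h)

theorem neg_one_le_of_forall_isAdjEigenval_le [Nonempty V] {k : ℕ} (hk : 0 < k)
    (hG : G.IsRegularOfDegree k) {θ : ℝ}
    (hθ : ∀ η : ℝ, IsAdjEigenval G η → η ≠ k → η ≤ θ) : -1 ≤ θ := by
  classical
  by_contra! hlt
  have hk' : (0 : ℝ) < k := Nat.cast_pos.2 hk
  have hV : (0 : ℝ) < Fintype.card V := Nat.cast_pos.2 Fintype.card_pos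
  set ev := (G.isHermitian_adjMatrix ℝ).eigenvalues
  have hsum : ∑ i, ev i = 0 :=
    (G.isHermitian_adjMatrix ℝ).trace_eq_sum_eigenvalues.symm.trans (G.trace_adjMatrix ℝ)
  have hsum_sq : ∑ i, ev i ^ 2 = Fintype.card V * k := by
    refine (trace_pow_eq_sum_eigenvalues_pow (G.isHermitian_adjMatrix ℝ) 2).symm.trans ?_
    simp only [trace, diag_apply, sq, SimpleGraph.adjMatrix_mul_self_apply_self, hG.degree_eq]
    simp
  have hprod : ∀ i, (k - ev i) * (ev i - θ) ≤ 0 := by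
    intro i
    by_cases hi : ev i = k
    · simp [hi]
    · have hle : ev i ≤ θ := hθ _ (isAdjEigenval_eigenvalues i) hi
      exact mul_nonpos_of_nonneg_of_nonpos (by linarith) (by linarith)
  have hexpand : ∑ i, (k - ev i) * (ev i - θ) = Fintype.card V * k * (-1 - θ) :=
    calc ∑ i, (k - ev i) * (ev i - θ) = ∑ i, ((k + θ) * ev i - ev i ^ 2 - k * θ) :=
          sum_congr rfl fun i _ => by ring
      _ = (k + θ) * ∑ i, ev i - ∑ i, ev i ^ 2 - Fintype.card V * (k * θ) := by
          simp [sum_sub_distrib, mul_sum]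
      _ = Fintype.card V * k * (-1 - θ) := by rw [hsum, hsum_sq]; ring
  have hpos : 0 < Fintype.card V * k * (-1 - θ) := mul_pos (mul_pos hV hk') (by linarith)
  exact (hexpand ▸ sum_nonpos fun i _ => hprod i).not_gt hpos

end Spectrum

theorem dist_getVert_of_length_eq_dist {V : Type*} {G : SimpleGraph V} {x y : V} {w : G.Walk x y}
    (hw : w.length = G.dist x y) {i : ℕ} (hi : i ≤ w.length) : G.dist x (w.getVert i) = i := by
  rw [← SimpleGraph.length_eq_dist_of_subwalk hw (w.isSubwalk_take i), w.take_length,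
    min_eq_left hi]

section Intersection

open Matrix

/-- The intersection number `cᵢ`, as a real number; `cNum p 0` is read off as `p 0 1 0`. -/
def cNum (p : ℕ → ℕ → ℕ → ℕ) (i : ℕ) : ℝ := p i 1 (i - 1)

/-- The intersection number `aᵢ`, as a real number. -/
def aNum (p : ℕ → ℕ → ℕ → ℕ) (i : ℕ) : ℝ := p i 1 i

/-- The intersection number `bᵢ`, as a real number; it is set to `0` for `i ≥ D`, where
`p i 1 (i + 1)` is not constrained by `IsDRG`. -/
def bNum (D : ℕ) (p : ℕ → ℕ → ℕ → ℕ) (i : ℕ) : ℝ := if i < D then p i 1 (i + 1) else 0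

/-- The intersection operator of a distance-regular graph, that is, the action of the adjacency
matrix on functions of the distance to a fixed vertex. -/
abbrev intersectionOp (D : ℕ) (p : ℕ → ℕ → ℕ → ℕ) : (ℕ → ℝ) →ₗ[ℝ] (ℕ → ℝ) :=
  threeTerm (cNum p) (aNum p) (bNum D p)

/-- The matrix `(p^i_{1j})` for `0 ≤ i, j ≤ D`, the quotient of the adjacency matrix by the
partition of the vertices according to the distance from a fixed vertex. -/
def intersectionMatrix (D : ℕ) (p : ℕ → ℕ → ℕ → ℕ) : Matrix (Fin (D + 1)) (Fin (D + 1)) ℝ :=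
  Matrix.of fun i j => (p i 1 j : ℝ)

/-- The characteristic matrix of the partition of the vertices by their distance from `x`. -/
noncomputable def distancePartitionMatrix {V : Type*} (G : SimpleGraph V) (D : ℕ) (x : V) :
    Matrix V (Fin (D + 1)) ℝ :=
  Matrix.of fun y i => if G.dist x y = i then 1 else 0

theorem distancePartitionMatrix_mulVec {V : Type*} (G : SimpleGraph V) {D : ℕ}
    (w : Fin (D + 1) → ℝ) {x y : V} (hxy : G.dist x y < D + 1) :
    (distancePartitionMatrix G D x *ᵥ w) y = w ⟨G.dist x y, hxy⟩ := by
  rw [mulVec_eq_sum, Finset.sum_apply, sum_eq_single ⟨G.dist x y, hxy⟩]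
  · simp [distancePartitionMatrix]
  · intro i _ hi
    have hne : G.dist x y ≠ i := fun h => hi (Fin.ext h.symm)
    simp [distancePartitionMatrix, hne]
  · simp

theorem cNum_nonneg (p : ℕ → ℕ → ℕ → ℕ) (i : ℕ) : 0 ≤ cNum p i :=
  Nat.cast_nonneg _

theorem bNum_nonneg (D : ℕ) (p : ℕ → ℕ → ℕ → ℕ) (i : ℕ) : 0 ≤ bNum D p i := by
  unfold bNum
  split_ifs <;> positivity

theorem bNum_of_lt {D i : ℕ} (p : ℕ → ℕ → ℕ → ℕ) (hi : i < D) : bNum D p i = p i 1 (i + 1) :=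
  if_pos hi

theorem bNum_zero {D : ℕ} (p : ℕ → ℕ → ℕ → ℕ) (hD : 0 < D) : bNum D p 0 = p 0 1 1 :=
  bNum_of_lt p hD

theorem bNum_self (D : ℕ) (p : ℕ → ℕ → ℕ → ℕ) : bNum D p D = 0 :=
  if_neg (lt_irrefl D)

end Intersection

namespace IsDRG

open Matrix

variable {V : Type*} [Fintype V] {G : SimpleGraph V} {D : ℕ} {p : ℕ → ℕ → ℕ → ℕ}

theorem exists_geodesic (hG : IsDRG G D p) :
    ∃ (x : V) (f : ℕ → V), (∀ i ≤ D, G.dist x (f i) = i) ∧ ∀ i < D, G.Adj (f i) (f (i + 1)) := by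
  obtain ⟨x, y, hxy⟩ := hG.exists_dist_eq
  obtain ⟨w, hw⟩ := hG.connected.exists_walk_length_eq_dist x y
  have hlen : w.length = D := hw.trans hxy
  exact ⟨x, w.getVert, fun i hi => dist_getVert_of_length_eq_dist hw (hi.trans_eq hlen.symm),
    fun i hi => w.adj_getVert_succ (hi.trans_eq hlen.symm)⟩

section Adjacency

variable [DecidableRel G.Adj]

theorem card_neighborFinset_filter_dist (hG : IsDRG G D p) (hD : 0 < D) (x y : V) {j : ℕ}
    (hj : j ≤ D) : #{z ∈ G.neighborFinset y | G.dist x z = j} = p (G.dist x y) 1 j := by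
  rw [← hG.inter _ 1 j (hG.dist_le x y) hD hj y x SimpleGraph.dist_comm, ← Set.ncard_coe_finset]
  congr 1
  ext z
  simp [SimpleGraph.dist_eq_one_iff_adj]

theorem isRegularOfDegree (hG : IsDRG G D p) (hD : 0 < D) : G.IsRegularOfDegree (p 0 1 1) := by
  intro x
  rw [← SimpleGraph.dist_self (G := G) (v := x), ← hG.card_neighborFinset_filter_dist hD x x hD,
    filter_true_of_mem, G.card_neighborFinset_eq_degree]
  exact fun z hz => SimpleGraph.dist_eq_one_iff_adj.2 ((G.mem_neighborFinset x z).1 hz)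

end Adjacency

theorem p_zero_one_zero (hG : IsDRG G D p) (hD : 0 < D) : p 0 1 0 = 0 := by
  classical
  obtain ⟨x⟩ := hG.connected.nonempty
  have hcard := hG.card_neighborFinset_filter_dist hD x x (Nat.zero_le D)
  rw [SimpleGraph.dist_self] at hcard
  rw [← hcard, card_eq_zero, filter_eq_empty_iff]
  intro z hz hxz
  exact G.ne_of_adj ((G.mem_neighborFinset x z).1 hz) (hG.connected.dist_eq_zero_iff.1 hxz)

theorem cNum_zero (hG : IsDRG G D p) (hD : 0 < D) : cNum p 0 = 0 := by
  simp [cNum, hG.p_zero_one_zero hD]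

theorem aNum_zero (hG : IsDRG G D p) (hD : 0 < D) : aNum p 0 = 0 := by
  simp [aNum, hG.p_zero_one_zero hD]

theorem cNum_one (hG : IsDRG G D p) (hD : 0 < D) : cNum p 1 = 1 := by
  classical
  obtain ⟨x, f, hdist, -⟩ := hG.exists_geodesic
  have hxf : G.dist x (f 1) = 1 := hdist 1 hD
  have hfilter : {z ∈ G.neighborFinset (f 1) | G.dist x z = 0} = {x} := by
    ext z
    rw [mem_filter, G.mem_neighborFinset, hG.connected.dist_eq_zero_iff, mem_singleton]
    refine ⟨fun hz => hz.2.symm, ?_⟩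
    rintro rfl
    exact ⟨(SimpleGraph.dist_eq_one_iff_adj.1 hxf).symm, rfl⟩
  have hcard := hG.card_neighborFinset_filter_dist hD x (f 1) (Nat.zero_le D)
  rw [hfilter, card_singleton, hxf] at hcard
  rw [cNum, Nat.sub_self, ← hcard, Nat.cast_one]

theorem bNum_pos (hG : IsDRG G D p) {i : ℕ} (hi : i < D) : 0 < bNum D p i := by
  classical
  obtain ⟨x, f, hdist, hadj⟩ := hG.exists_geodesic
  have hcard := hG.card_neighborFinset_filter_dist (Nat.zero_lt_of_lt hi) x (f i) hi
  rw [hdist i hi.le] at hcard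
  rw [bNum_of_lt p hi, ← hcard, Nat.cast_pos, card_pos]
  exact ⟨f (i + 1), mem_filter.2 ⟨(G.mem_neighborFinset _ _).2 (hadj i hi), hdist (i + 1) hi⟩⟩

section Adjacency

variable [DecidableRel G.Adj]

theorem sum_neighborFinset_dist (hG : IsDRG G D p) (hD : 0 < D) (w : ℕ → ℝ) (x y : V) :
    ∑ z ∈ G.neighborFinset y, w (G.dist x z) = intersectionOp D p w (G.dist x y) := by
  have hmaps : ∀ z ∈ G.neighborFinset y,
      G.dist x z ∈ Icc (G.dist x y - 1) (G.dist x y + 1) := fun z hz => by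
    have := ((G.mem_neighborFinset y z).1 hz).diff_dist_adj (u := x)
    rw [mem_Icc]
    omega
  have hcount : ∀ j, (#{z ∈ G.neighborFinset y | G.dist x z = j} : ℝ) =
      if j ≤ D then (p (G.dist x y) 1 j : ℝ) else 0 := by
    intro j
    split_ifs with hj
    · rw [hG.card_neighborFinset_filter_dist hD x y hj]
    · rw [Nat.cast_eq_zero, card_eq_zero, filter_eq_empty_iff]
      exact fun z _ hz => hj (hz ▸ hG.dist_le x z)
  have hle := hG.dist_le x y
  rw [← sum_fiberwise_of_maps_to' hmaps, threeTerm_apply, cNum, aNum, bNum]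
  simp only [sum_const, nsmul_eq_mul, hcount]
  generalize G.dist x y = i at hle
  rcases i with _ | i
  · simp [sum_Icc_succ_top, hG.p_zero_one_zero hD, Nat.succ_le_iff]
  · simp [sum_Icc_succ_top, hle, (Nat.le_succ i).trans hle, Nat.succ_le_iff, add_assoc]

theorem adjMatrix_mul_distancePartitionMatrix (hG : IsDRG G D p) (hD : 0 < D) (x : V) :
    G.adjMatrix ℝ * distancePartitionMatrix G D x =
      distancePartitionMatrix G D x * intersectionMatrix D p := by
  ext y j
  calc (G.adjMatrix ℝ * distancePartitionMatrix G D x) y j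
      = ∑ z ∈ G.neighborFinset y, distancePartitionMatrix G D x z j :=
        G.adjMatrix_mulVec_apply y _
    _ = p (G.dist x y) 1 j := by
        simp [distancePartitionMatrix,
          hG.card_neighborFinset_filter_dist hD x y (Nat.le_of_lt_succ j.2)]
    _ = (distancePartitionMatrix G D x * intersectionMatrix D p) y j :=
        (distancePartitionMatrix_mulVec G (fun i => intersectionMatrix D p i j)
          (Nat.lt_succ_of_le (hG.dist_le x y))).symm

end Adjacency

theorem cNum_add_aNum_add_bNum (hG : IsDRG G D p) (hD : 0 < D) {i : ℕ} (hi : i ≤ D) :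
    cNum p i + aNum p i + bNum D p i = p 0 1 1 := by
  classical
  obtain ⟨x, f, hdist, -⟩ := hG.exists_geodesic
  have hsum := hG.sum_neighborFinset_dist hD (fun _ => 1) x (f i)
  rw [sum_const, G.card_neighborFinset_eq_degree, hG.isRegularOfDegree hD, nsmul_one,
    hdist i hi, threeTerm_apply] at hsum
  simpa only [mul_one] using hsum.symm

theorem intersectionMatrix_mulVec (hG : IsDRG G D p) (hD : 0 < D) (w : ℕ → ℝ) (i : Fin (D + 1)) :
    (intersectionMatrix D p *ᵥ fun j => w j) i = intersectionOp D p w i := by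
  classical
  obtain ⟨x, f, hdist, -⟩ := hG.exists_geodesic
  have hlt : ∀ y, G.dist x y < D + 1 := fun y => Nat.lt_succ_of_le (hG.dist_le x y)
  have hfi : G.dist x (f i) = i := hdist i (Nat.le_of_lt_succ i.2)
  have hradial : distancePartitionMatrix G D x *ᵥ (fun j => w j) = fun y => w (G.dist x y) :=
    funext fun y => distancePartitionMatrix_mulVec G _ (hlt y)
  calc (intersectionMatrix D p *ᵥ fun j => w j) i
      = (distancePartitionMatrix G D x *ᵥ (intersectionMatrix D p *ᵥ fun j => w j)) (f i) := by
        simp only [distancePartitionMatrix_mulVec G _ (hlt (f i)), hfi, Fin.eta]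
    _ = (G.adjMatrix ℝ *ᵥ fun y => w (G.dist x y)) (f i) := by
        rw [mulVec_mulVec, ← hG.adjMatrix_mul_distancePartitionMatrix hD, ← mulVec_mulVec, hradial]
    _ = intersectionOp D p w i := by
        rw [SimpleGraph.adjMatrix_mulVec_apply, hG.sum_neighborFinset_dist hD, hfi]

theorem exists_intersectionOp_eq [DecidableRel G.Adj] (hG : IsDRG G D p) (hD : 0 < D) {η : ℝ}
    (hη : IsAdjEigenval G η) :
    ∃ w : ℕ → ℝ, (∃ i ≤ D, w i ≠ 0) ∧ ∀ i ≤ D, intersectionOp D p w i = η * w i := by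
  obtain ⟨v, hv, hAv⟩ := hη
  obtain ⟨x, hx⟩ := Function.ne_iff.1 hv
  have hsphere_ne : v ᵥ* distancePartitionMatrix G D x ≠ 0 := by
    refine Function.ne_iff.2 ⟨0, ?_⟩
    have hsphere_zero : (v ᵥ* distancePartitionMatrix G D x) 0 = v x := by
      classical
      simp [vecMul, dotProduct, distancePartitionMatrix, hG.connected.dist_eq_zero_iff]
    rwa [hsphere_zero]
  have hsphere : (v ᵥ* distancePartitionMatrix G D x) ᵥ* intersectionMatrix D p =
      η • (v ᵥ* distancePartitionMatrix G D x) := by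
    rw [vecMul_vecMul, ← hG.adjMatrix_mul_distancePartitionMatrix hD, ← vecMul_vecMul,
      ← mulVec_transpose (G.adjMatrix ℝ), G.transpose_adjMatrix, hAv, smul_vecMul]
  obtain ⟨w, hw, hBw⟩ := exists_mulVec_eq_smul_of_vecMul_eq_smul hsphere_ne hsphere
  have hw_eq : (fun j : Fin (D + 1) => w (Fin.ofNat (D + 1) j)) = w := by
    simp
  refine ⟨fun i => w (Fin.ofNat (D + 1) i), ?_, fun i hi => ?_⟩
  · obtain ⟨i, hi⟩ := Function.ne_iff.1 hw
    exact ⟨i, Nat.le_of_lt_succ i.2, by simpa using hi⟩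
  · have hrow := hG.intersectionMatrix_mulVec hD (fun i => w (Fin.ofNat (D + 1) i))
      ⟨i, Nat.lt_succ_of_le hi⟩
    rw [hw_eq, hBw] at hrow
    rw [← hrow]
    simp [Fin.ofNat, Nat.mod_eq_of_lt (Nat.lt_succ_of_le hi)]

end IsDRG

section StandardSequence

variable {V : Type*} [Fintype V] {G : SimpleGraph V} {D : ℕ} {p : ℕ → ℕ → ℕ → ℕ} {θ q : ℝ}
  {u : ℕ → ℝ}

theorem IsClassicalQType.sub_succ (hu : IsClassicalQType D q u) :
    ∀ i < D, u i - u (i + 1) = (1 / q) ^ i * (u 0 - u 1) := by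
  obtain ⟨c, hc⟩ := hu
  intro i hi
  induction i with
  | zero => simp
  | succ i ih =>
    have hstep : u (i + 1) = 1 / q * u i + c := hc (i + 1) (by omega) hi.le
    have hstep' : u (i + 1 + 1) = 1 / q * u (i + 1) + c := hc (i + 1 + 1) (by omega) hi
    rw [pow_succ]
    linear_combination hstep - hstep' + 1 / q * ih (by omega)

theorem IsStdSeq.apply_zero_ne_apply_one (hu : IsStdSeq D p θ u) (hG : IsDRG G D p) (hD : 0 < D)
    (hθ : θ ≠ p 0 1 1) : u 0 ≠ u 1 := by
  have hk : (p 0 1 1 : ℝ) ≠ 0 := bNum_zero p hD ▸ (hG.bNum_pos hD).ne'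
  rw [hu.1, hu.2.1, ne_comm, Ne, div_eq_one_iff_eq hk]
  exact hθ

theorem IsStdSeq.intersectionOp_eq_of_lt (hu : IsStdSeq D p θ u) (hG : IsDRG G D p) {i : ℕ}
    (hi : i < D) : intersectionOp D p u i = θ * u i := by
  rw [threeTerm_apply]
  rcases Nat.eq_zero_or_pos i with rfl | hpos
  · have hk : (p 0 1 1 : ℝ) ≠ 0 := bNum_zero p hi ▸ (hG.bNum_pos hi).ne'
    rw [hG.cNum_zero hi, hG.aNum_zero hi, bNum_zero p hi, hu.1, hu.2.1]
    field_simp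
    ring
  · rw [cNum, aNum, bNum_of_lt p hi]
    exact hu.2.2 i hpos (Nat.le_sub_one_of_lt hi)

theorem IsStdSeq.intersectionOp_eq [DecidableRel G.Adj] (hu : IsStdSeq D p θ u)
    (hG : IsDRG G D p) (hD : 0 < D) (hθ : IsAdjEigenval G θ) :
    ∀ i ≤ D, intersectionOp D p u i = θ * u i :=
  threeTerm_eq_of_exists_eigenvector (fun _ hi => (hG.bNum_pos hi).ne') (bNum_self D p)
    (fun _ hi => hu.intersectionOp_eq_of_lt hG hi) (hG.exists_intersectionOp_eq hD hθ)

theorem IsStdSeq.one_add_eq_bNum_div (hu : IsStdSeq D p θ u) (hct : IsClassicalQType D q u)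
    (hG : IsDRG G D p) (hD : 2 ≤ D) (hθ : θ ≠ p 0 1 1) : 1 + θ = bNum D p 1 / q := by
  have hD0 : 0 < D := by omega
  have hrow := threeTerm_sub_succ (hG.cNum_zero hD0) (hG.cNum_add_aNum_add_bNum hD0 hD0.le)
    (hG.cNum_add_aNum_add_bNum hD0 hD0) u
  rw [hu.intersectionOp_eq_of_lt hG hD0, hu.intersectionOp_eq_of_lt hG hD, threeTerm_apply,
    hG.cNum_zero hD0, bNum_zero p hD0, zero_add, hG.cNum_one hD0, hct.sub_succ 1 hD] at hrow
  refine mul_right_cancel₀ (sub_ne_zero.2 (hu.apply_zero_ne_apply_one hG hD0 hθ)) ?_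
  linear_combination -hrow

theorem IsStdSeq.lt_neg_one_of_neg (hu : IsStdSeq D p θ u) (hct : IsClassicalQType D q u)
    (hG : IsDRG G D p) (hD : 2 ≤ D) (hθ : θ ≠ p 0 1 1) (hq : q < 0) : θ < -1 := by
  have h : 1 + θ < 0 := by
    rw [hu.one_add_eq_bNum_div hct hG hD hθ]
    exact div_neg_of_pos_of_neg (hG.bNum_pos hD) hq
  linarith

theorem IsStdSeq.isAdjEigenval_le_of_pos [DecidableRel G.Adj] (hu : IsStdSeq D p θ u)
    (hct : IsClassicalQType D q u) (hG : IsDRG G D p) (hD : 0 < D) (hθ : IsAdjEigenval G θ)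
    (hθk : θ ≠ p 0 1 1) (hq : 0 < q) {η : ℝ} (hη : IsAdjEigenval G η) (hηk : η ≠ p 0 1 1) :
    η ≤ θ := by
  obtain ⟨w, hw, hwη⟩ := hG.exists_intersectionOp_eq hD hη
  have hdiff : u 0 - u 1 ≠ 0 := sub_ne_zero.2 (hu.apply_zero_ne_apply_one hG hD hθk)
  have hscaled : ∀ i ≤ D, intersectionOp D p ((u 0 - u 1)⁻¹ • u) i =
      θ * ((u 0 - u 1)⁻¹ • u) i := fun i hi => by
    rw [map_smul, Pi.smul_apply, hu.intersectionOp_eq hG hD hθ i hi, Pi.smul_apply, mul_smul_comm]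
  have hanti : ∀ i < D, ((u 0 - u 1)⁻¹ • u) (i + 1) < ((u 0 - u 1)⁻¹ • u) i := fun i hi => by
    rw [← sub_pos, Pi.smul_apply, Pi.smul_apply, ← smul_sub, hct.sub_succ i hi, smul_eq_mul,
      mul_left_comm, inv_mul_cancel₀ hdiff, mul_one]
    positivity
  exact le_of_threeTerm_eq_of_strictAnti hD (cNum_nonneg p) (bNum_nonneg D p) (hG.cNum_zero hD)
    (bNum_self D p) (fun _ hi => hG.cNum_add_aNum_add_bNum hD hi) hscaled hanti hwη hw hηk

end StandardSequence

/-- Let `θ ≠ k` be an eigenvalue of classical `q`-type of a distance-regular graph of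
diameter `D ≥ 2`, and let `θ₁` be the largest adjacency eigenvalue different from `k`.
Then `θ = θ₁` iff `q > 0`. -/
theorem stmt11 {V : Type*} [Fintype V] (G : SimpleGraph V) [DecidableRel G.Adj]
    (D : ℕ) (p : ℕ → ℕ → ℕ → ℕ) (hdrg : IsDRG G D p) (hD : 2 ≤ D)
    (q : ℝ) (hq : q ≠ 0)
    (θ : ℝ) (hθ : IsAdjEigenval G θ) (hθk : θ ≠ (p 0 1 1 : ℝ))
    (u : ℕ → ℝ) (hu : IsStdSeq D p θ u) (hct : IsClassicalQType D q u)
    (θ₁ : ℝ) (hθ₁ : IsAdjEigenval G θ₁) (hθ₁k : θ₁ ≠ (p 0 1 1 : ℝ))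
    (hθ₁max : ∀ η : ℝ, IsAdjEigenval G η → η ≠ (p 0 1 1 : ℝ) → η ≤ θ₁) :
    θ = θ₁ ↔ 0 < q := by
  have hD0 : 0 < D := by omega
  constructor
  · rintro rfl
    have : Nonempty V := hdrg.connected.nonempty
    have hk : 0 < p 0 1 1 := Nat.cast_pos.1 (bNum_zero p hD0 ▸ hdrg.bNum_pos hD0)
    have hθ_ge : -1 ≤ θ :=
      neg_one_le_of_forall_isAdjEigenval_le hk (hdrg.isRegularOfDegree hD0) hθ₁max
    by_contra hq_nonpos
    have hq_neg : q < 0 := (not_lt.1 hq_nonpos).lt_of_ne hq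
    exact hθ_ge.not_gt (hu.lt_neg_one_of_neg hct hdrg hD hθk hq_neg)
  · intro hq_pos
    exact (hθ₁max θ hθ hθk).antisymm
      (hu.isAdjEigenval_le_of_pos hct hdrg hD0 hθ hθk hq_pos hθ₁ hθ₁k)
end

section
/- Let Γ be a distance-regular graph with intersection numbers c_1 = 1 and second largest distinct adjacency eigenvalue θ_1 (the maximum of the adjacency eigenvalues different from the valency k). If Γ contains an induced complete bipartite subgraph K_{r,r} for some integer r ≥ 2 (i.e., there are 2r distinct vertices x_1,…,x_r, y_1,…,y_r such that x_i is adjacent to y_j for all i,j, and no two x_i are adjacent and no two y_j are adjacent), then θ_1 ≤ b_1/(r−1) − 1. -/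
/-!
Let `θ ≠ k` be an eigenvalue of the adjacency matrix `A`. The Bose–Mesner algebra contains a nonzero
positive semidefinite `E` with `A E = θ E`; scaled to have unit diagonal, its entries are
`E x y = u (d (x, y))` for the standard sequence `u` of `θ`. Testing `E` on the vector equal to `t`
on one side of an induced `K_{s,t}`, to `-s` on the other side and to `0` elsewhere gives
`2st (u₁ - u₂) ≤ (s + t) (u₀ - u₂)`. The three-term recurrence gives
`b₁ (u₁ - u₂) = (θ + 1) (u₀ - u₁)`. Here `u₀ - u₁` is nonnegative since `E` is positive
semidefinite, and nonzero since `u₁ = θ / k ≠ 1 = u₀`; eliminating `u₂` and cancelling `u₀ - u₁`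
bounds `θ`.
-/

open Finset Matrix

section Algebra

theorem exists_mem_adjoin_mul_eq_smul_of_isRoot_minpoly {K B : Type*} [Field K] [Ring B]
    [Algebra K B] {a : B} {θ : K} (ha : IsIntegral K a) (hθ : (minpoly K a).IsRoot θ) :
    ∃ b ∈ Algebra.adjoin K {a}, b ≠ 0 ∧ a * b = θ • b := by
  obtain ⟨P, hP⟩ := Polynomial.dvd_iff_isRoot.2 hθ
  have hP0 : P ≠ 0 := right_ne_zero_of_mul (hP ▸ minpoly.ne_zero ha)
  refine ⟨Polynomial.aeval a P, Polynomial.aeval_mem_adjoin_singleton K a, fun h ↦ ?_, ?_⟩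
  · have hdeg := Polynomial.natDegree_le_natDegree (minpoly.degree_le_of_ne_zero K a hP0 h)
    rw [hP, Polynomial.natDegree_mul (Polynomial.X_sub_C_ne_zero θ) hP0,
      Polynomial.natDegree_X_sub_C] at hdeg
    lia
  · have h := minpoly.aeval K a
    rwa [hP, map_mul, map_sub, Polynomial.aeval_X, Polynomial.aeval_C, sub_mul, sub_eq_zero,
      ← Algebra.smul_def] at h

theorem sum_sum_eq_of_apply_eq {α R : Type*} [Fintype α] [CommRing R] {F : α → α → R} {d e : R}
    (hdiag : ∀ a, F a a = d) (hoff : ∀ a a', a ≠ a' → F a a' = e) :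
    ∑ a, ∑ a', F a a' = Fintype.card α * (d - e + Fintype.card α * e) := by
  classical
  have hF (a a' : α) : F a a' = (if a = a' then d - e else 0) + e := by
    split_ifs with h
    · rw [← h, hdiag, sub_add_cancel]
    · rw [hoff a a' h, zero_add]
  simp [hF, sum_add_distrib, mul_add]

theorem sumElim_const_dotProduct_mulVec {α β R : Type*} [Fintype α] [Fintype β] [CommRing R]
    (M : Matrix (α ⊕ β) (α ⊕ β) R) (c d : R) :
    Sum.elim (fun _ ↦ c) (fun _ ↦ d) ⬝ᵥ M *ᵥ Sum.elim (fun _ ↦ c) (fun _ ↦ d) =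
      c ^ 2 * ∑ a, ∑ a', M (.inl a) (.inl a') + c * d * ∑ a, ∑ b, M (.inl a) (.inr b) +
        (c * d * ∑ b, ∑ a, M (.inr b) (.inl a) + d ^ 2 * ∑ b, ∑ b', M (.inr b) (.inr b')) := by
  simp only [dotProduct, mulVec, Fintype.sum_sum_type, Sum.elim_inl, Sum.elim_inr, ← sum_mul,
    ← mul_sum, sum_add_distrib]
  ring

theorem IsAdjEigenval.isRoot_minpoly {V : Type*} [Fintype V] [DecidableEq V] {G : SimpleGraph V}
    [DecidableRel G.Adj] {θ : ℝ} (hθ : IsAdjEigenval G θ) :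
    (minpoly ℝ (G.adjMatrix ℝ)).IsRoot θ := by
  obtain ⟨v, hv0, hv⟩ := hθ
  rw [← Matrix.minpoly_toLin']
  exact Module.End.isRoot_of_hasEigenvalue <| Module.End.hasEigenvalue_of_hasEigenvector (x := v)
    ⟨Module.End.mem_eigenspace_iff.2 ((toLin'_apply _ _).trans hv), hv0⟩

end Algebra

section Distance

variable {V : Type*} {G : SimpleGraph V}

theorem dist_eq_two {x y z : V} (hne : x ≠ y) (hnadj : ¬ G.Adj x y) (hx : G.Adj x z)
    (hy : G.Adj y z) : G.dist x y = 2 := by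
  have h : G.edist x y = 2 := SimpleGraph.edist_eq_two_iff.2 ⟨hne, hnadj, z, hx, hy⟩
  rw [SimpleGraph.dist, h]
  rfl

theorem exists_dist_eq_of_le_dist {x y : V} {i : ℕ} (hxy : G.Reachable x y)
    (hi : i ≤ G.dist x y) : ∃ z, G.dist x z = i := by
  obtain ⟨w, hw⟩ := hxy.exists_walk_length_eq_dist
  refine ⟨w.getVert i, ?_⟩
  rw [← SimpleGraph.length_eq_dist_of_subwalk hw (w.isSubwalk_take i),
    SimpleGraph.Walk.take_length, min_eq_left (hi.trans hw.ge)]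

/-- The matrix with entries `f (d (x, y))`. For a distance-regular graph these matrices form the
Bose–Mesner algebra. -/
noncomputable def distMatrix {R : Type*} (G : SimpleGraph V) (f : ℕ → R) : Matrix V V R :=
  Matrix.of fun x y ↦ f (G.dist x y)

theorem distMatrix_apply {R : Type*} (f : ℕ → R) (x y : V) :
    distMatrix G f x y = f (G.dist x y) := rfl

theorem transpose_distMatrix {R : Type*} (f : ℕ → R) :
    (distMatrix G f)ᵀ = distMatrix G f := by
  ext x y
  rw [transpose_apply, distMatrix_apply, distMatrix_apply, SimpleGraph.dist_comm]

theorem pos_of_posSemidef_distMatrix [Finite V] {g : ℕ → ℝ}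
    (hg : (distMatrix G g).PosSemidef) (hne : distMatrix G g ≠ 0) : 0 < g 0 := by
  cases nonempty_fintype V
  have htrace : (distMatrix G g).trace = Fintype.card V * g 0 := by
    simp [trace, distMatrix_apply]
  have hpos : 0 < (distMatrix G g).trace :=
    hg.trace_nonneg.lt_of_ne' (hg.trace_eq_zero_iff.not.2 hne)
  exact pos_of_mul_pos_right (htrace ▸ hpos) (Nat.cast_nonneg _)

theorem apply_dist_le_of_posSemidef_distMatrix {g : ℕ → ℝ}
    (hg : (distMatrix G g).PosSemidef) (x y : V) : g (G.dist x y) ≤ g 0 := by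
  have hg0 : 0 ≤ g 0 := by simpa [distMatrix_apply] using hg.diag_nonneg (i := x)
  have hdet := (hg.submatrix ![x, y]).det_nonneg
  simp only [det_fin_two, submatrix_apply, distMatrix_apply, cons_val_zero, cons_val_one,
    SimpleGraph.dist_self, SimpleGraph.dist_comm (u := y)] at hdet
  exact le_of_abs_le (abs_le_of_sq_le_sq (by linarith) hg0)

end Distance

section CompleteBipartite

variable {V α β : Type*} {G : SimpleGraph V}

/-- The embedding of `K_{α,β}` as an induced subgraph of `G` given by the vertices of its two
sides. -/
def completeBipartiteEmbedding {x : α → V} {y : β → V} (hx : Function.Injective x)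
    (hy : Function.Injective y) (hadj : ∀ i j, G.Adj (x i) (y j))
    (hxnadj : ∀ i j, i ≠ j → ¬ G.Adj (x i) (x j)) (hynadj : ∀ i j, i ≠ j → ¬ G.Adj (y i) (y j)) :
    completeBipartiteGraph α β ↪g G where
  toFun := Sum.elim x y
  inj' := hx.sumElim hy fun i j ↦ (hadj i j).ne
  map_rel_iff' := by
    have hx' : ∀ i j, ¬ G.Adj (x i) (x j) := fun i j h ↦ hxnadj i j (by rintro rfl; simp at h) h
    have hy' : ∀ i j, ¬ G.Adj (y i) (y j) := fun i j h ↦ hynadj i j (by rintro rfl; simp at h) h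
    rintro (i | i) (j | j) <;> simp [hx', hy', hadj, (hadj _ _).symm]

theorem adj_inl_inr (φ : completeBipartiteGraph α β ↪g G) (a : α) (b : β) :
    G.Adj (φ (.inl a)) (φ (.inr b)) :=
  φ.map_rel_iff.2 (by simp)

theorem dist_inl_inr (φ : completeBipartiteGraph α β ↪g G) (a : α) (b : β) :
    G.dist (φ (.inl a)) (φ (.inr b)) = 1 :=
  SimpleGraph.dist_eq_one_iff_adj.2 (adj_inl_inr φ a b)

theorem dist_inl_inl [Nonempty β] (φ : completeBipartiteGraph α β ↪g G) {a a' : α} (h : a ≠ a') :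
    G.dist (φ (.inl a)) (φ (.inl a')) = 2 := by
  obtain ⟨b⟩ := ‹Nonempty β›
  refine dist_eq_two (by simpa using h) (fun hadj ↦ ?_) (adj_inl_inr φ a b) (adj_inl_inr φ a' b)
  simpa using φ.map_rel_iff.1 hadj

theorem dist_inr_inr [Nonempty α] (φ : completeBipartiteGraph α β ↪g G) {b b' : β} (h : b ≠ b') :
    G.dist (φ (.inr b)) (φ (.inr b')) = 2 := by
  obtain ⟨a⟩ := ‹Nonempty α›
  refine dist_eq_two (by simpa using h) (fun hadj ↦ ?_) (adj_inl_inr φ a b).symm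
    (adj_inl_inr φ a b').symm
  simpa using φ.map_rel_iff.1 hadj

theorem two_mul_card_mul_sub_le_of_posSemidef_distMatrix [Fintype α] [Fintype β] [Nonempty α]
    [Nonempty β] (φ : completeBipartiteGraph α β ↪g G) {g : ℕ → ℝ}
    (hg : (distMatrix G g).PosSemidef) :
    2 * Fintype.card α * Fintype.card β * (g 1 - g 2) ≤
      (Fintype.card α + Fintype.card β) * (g 0 - g 2) := by
  set s : ℝ := (Fintype.card α : ℝ)
  set t : ℝ := (Fintype.card β : ℝ)
  have hs : 0 < s := by simpa [s] using Fintype.card_pos (α := α)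
  have ht : 0 < t := by simpa [t] using Fintype.card_pos (α := β)
  have hα : ∑ a, ∑ a', g (G.dist (φ (.inl a)) (φ (.inl a'))) = s * (g 0 - g 2 + s * g 2) :=
    sum_sum_eq_of_apply_eq (by simp) fun a a' h ↦ by rw [dist_inl_inl φ h]
  have hβ : ∑ b, ∑ b', g (G.dist (φ (.inr b)) (φ (.inr b'))) = t * (g 0 - g 2 + t * g 2) :=
    sum_sum_eq_of_apply_eq (by simp) fun b b' h ↦ by rw [dist_inr_inr φ h]
  have hform := (hg.submatrix φ).dotProduct_mulVec_nonneg (Sum.elim (fun _ ↦ t) fun _ ↦ -s)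
  rw [star_trivial, sumElim_const_dotProduct_mulVec] at hform
  simp only [submatrix_apply, distMatrix_apply, hα, hβ, dist_inl_inr,
    G.dist_comm (u := φ (.inr _)) (v := φ (.inl _)), sum_const, card_univ, nsmul_eq_mul] at hform
  refine le_of_mul_le_mul_left ?_ (mul_pos hs ht)
  linear_combination hform

end CompleteBipartite

section DistanceRegular

variable {V : Type*} [Fintype V] {G : SimpleGraph V} {D : ℕ} {p : ℕ → ℕ → ℕ → ℕ}

namespace IsDRG

theorem card_filter_dist (h : IsDRG G D p) (x y : V) {i j : ℕ} (hi : i ≤ D) (hj : j ≤ D) :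
    #{z | G.dist x z = i ∧ G.dist y z = j} = p (G.dist x y) i j := by
  rw [← h.inter _ i j (h.dist_le x y) hi hj x y rfl, Set.ncard_eq_toFinset_card']
  simp

theorem exists_dist_eq_of_le (h : IsDRG G D p) {i : ℕ} (hi : i ≤ D) :
    ∃ x y, G.dist x y = i := by
  obtain ⟨x, y, hxy⟩ := h.exists_dist_eq
  exact ⟨x, exists_dist_eq_of_le_dist (h.connected x y) (hi.trans hxy.ge)⟩

theorem c_one_eq_one (h : IsDRG G D p) (hD : 0 < D) : p 1 1 0 = 1 := by
  obtain ⟨x, y, hxy⟩ := h.exists_dist_eq_of_le (i := 1) hD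
  have hz : ({z | G.dist x z = 1 ∧ G.dist y z = 0} : Finset V) = {y} := by
    ext z
    simp only [h.connected.dist_eq_zero_iff, mem_filter, mem_univ, true_and, mem_singleton]
    exact ⟨fun hz ↦ hz.2.symm, by rintro rfl; exact ⟨hxy, rfl⟩⟩
  have hcard := h.card_filter_dist x y hD (Nat.zero_le D)
  rwa [hz, card_singleton, hxy, eq_comm] at hcard

theorem sum_dist_dist (h : IsDRG G D p) {R : Type*} [Semiring R] (f : ℕ → ℕ → R) (x y : V) :
    ∑ z, f (G.dist x z) (G.dist y z) =
      ∑ ij ∈ range (D + 1) ×ˢ range (D + 1), p (G.dist x y) ij.1 ij.2 * f ij.1 ij.2 := by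
  have hmem (z : V) : (G.dist x z, G.dist y z) ∈ range (D + 1) ×ˢ range (D + 1) := by
    simp [h.dist_le]
  rw [← sum_fiberwise_of_maps_to' (fun z _ ↦ hmem z) fun ij ↦ f ij.1 ij.2]
  refine sum_congr rfl fun ij hij ↦ ?_
  rw [mem_product, mem_range_succ_iff, mem_range_succ_iff] at hij
  simp [Prod.ext_iff, h.card_filter_dist x y hij.1 hij.2]

/-- The Bose–Mesner algebra: the matrices whose entries depend only on the distance between the
indexing vertices. -/
def boseMesnerAlgebra [DecidableEq V] (h : IsDRG G D p) (R : Type*) [CommSemiring R] :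
    Subalgebra R (Matrix V V R) where
  carrier := Set.range (distMatrix G)
  add_mem' := by
    rintro _ _ ⟨f, rfl⟩ ⟨g, rfl⟩
    exact ⟨f + g, rfl⟩
  mul_mem' := by
    rintro _ _ ⟨f, rfl⟩ ⟨g, rfl⟩
    refine ⟨fun l ↦ ∑ ij ∈ range (D + 1) ×ˢ range (D + 1), p l ij.1 ij.2 * (f ij.1 * g ij.2), ?_⟩
    ext x y
    rw [mul_apply, distMatrix_apply, ← h.sum_dist_dist fun i j ↦ f i * g j]
    exact sum_congr rfl fun z _ ↦ by rw [distMatrix_apply, distMatrix_apply, G.dist_comm (u := y)]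
  algebraMap_mem' r := by
    refine ⟨fun i ↦ if i = 0 then r else 0, ?_⟩
    ext x y
    simp [distMatrix_apply, algebraMap_matrix_apply, h.connected.dist_eq_zero_iff]

theorem adjMatrix_mem_boseMesnerAlgebra [DecidableEq V] [DecidableRel G.Adj] (h : IsDRG G D p)
    (R : Type*) [CommSemiring R] : G.adjMatrix R ∈ h.boseMesnerAlgebra R := by
  refine ⟨fun i ↦ if i = 1 then 1 else 0, ?_⟩
  ext x y
  simp [distMatrix_apply, SimpleGraph.adjMatrix_apply]

theorem exists_posSemidef_distMatrix [DecidableRel G.Adj] (h : IsDRG G D p) {θ : ℝ}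
    (hθ : IsAdjEigenval G θ) :
    ∃ u : ℕ → ℝ, u 0 = 1 ∧ (distMatrix G u).PosSemidef ∧
      G.adjMatrix ℝ * distMatrix G u = θ • distMatrix G u := by
  classical
  obtain ⟨_, hmem, hF0, hAF⟩ := exists_mem_adjoin_mul_eq_smul_of_isRoot_minpoly
    (Matrix.isIntegral (G.adjMatrix ℝ)) hθ.isRoot_minpoly
  have hle : Algebra.adjoin ℝ {G.adjMatrix ℝ} ≤ h.boseMesnerAlgebra ℝ :=
    Algebra.adjoin_le (Set.singleton_subset_iff.2 (h.adjMatrix_mem_boseMesnerAlgebra ℝ))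
  obtain ⟨f, rfl⟩ := hle hmem
  obtain ⟨g, hg⟩ := (h.boseMesnerAlgebra ℝ).mul_mem ⟨f, rfl⟩ ⟨f, rfl⟩
  have hconj : (distMatrix G f)ᴴ * distMatrix G f = distMatrix G g := by
    rw [conjTranspose_eq_transpose_of_trivial, transpose_distMatrix, hg]
  have hpsd : (distMatrix G g).PosSemidef := hconj ▸ posSemidef_conjTranspose_mul_self _
  have hg0 : 0 < g 0 := pos_of_posSemidef_distMatrix hpsd
    (hconj ▸ conjTranspose_mul_self_eq_zero.not.2 hF0)
  have hAg : G.adjMatrix ℝ * distMatrix G g = θ • distMatrix G g := by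
    rw [hg, ← mul_assoc, hAF, smul_mul_assoc]
  have hscale : distMatrix G ((g 0)⁻¹ • g) = (g 0)⁻¹ • distMatrix G g := rfl
  refine ⟨(g 0)⁻¹ • g, inv_mul_cancel₀ hg0.ne', ?_, ?_⟩
  · exact hscale ▸ hpsd.smul (inv_nonneg.2 hg0.le)
  · rw [hscale, mul_smul_comm, hAg, smul_comm]

theorem card_filter_neighborFinset_dist [DecidableRel G.Adj] (h : IsDRG G D p) (hD : 0 < D)
    (x y : V) {j : ℕ} (hj : j ≤ D) :
    #{z ∈ G.neighborFinset x | G.dist y z = j} = p (G.dist x y) 1 j := by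
  rw [← h.card_filter_dist x y hD hj, SimpleGraph.neighborFinset_eq_filter, filter_filter]
  simp only [SimpleGraph.dist_eq_one_iff_adj]

theorem degree_eq [DecidableRel G.Adj] (h : IsDRG G D p) (hD : 0 < D) (x : V) :
    G.degree x = p 0 1 1 := by
  rw [← SimpleGraph.card_neighborFinset_eq_degree, ← SimpleGraph.dist_self (G := G) (v := x),
    ← h.card_filter_neighborFinset_dist hD x x hD, filter_true_of_mem]
  simp

theorem valency_pos (h : IsDRG G D p) (hD : 0 < D) : 0 < p 0 1 1 := by
  classical
  obtain ⟨x, y, hxy⟩ := h.exists_dist_eq_of_le (i := 1) hD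
  rw [← h.degree_eq hD x, SimpleGraph.degree_pos_iff_exists_adj]
  exact ⟨y, SimpleGraph.dist_eq_one_iff_adj.1 hxy⟩

theorem sum_neighborFinset_dist_s12 [DecidableRel G.Adj] (h : IsDRG G D p) {R : Type*} [Semiring R]
    (f : ℕ → R) {x y : V} {i : ℕ} (hxy : G.dist x y = i) (hi : 1 ≤ i) (hiD : i < D) :
    ∑ z ∈ G.neighborFinset x, f (G.dist y z) =
      p i 1 (i - 1) * f (i - 1) + p i 1 i * f i + p i 1 (i + 1) * f (i + 1) := by
  have hmem : ∀ z ∈ G.neighborFinset x, G.dist y z ∈ ({i - 1, i, i + 1} : Finset ℕ) := by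
    intro z hz
    have hdist := ((G.mem_neighborFinset x z).1 hz).diff_dist_adj (u := y)
    rw [SimpleGraph.dist_comm (v := x), hxy] at hdist
    simp only [mem_insert, mem_singleton]
    lia
  have hcard : ∀ j ≤ D, #{z ∈ G.neighborFinset x | G.dist y z = j} = p i 1 j := fun j hj ↦
    hxy ▸ h.card_filter_neighborFinset_dist (by lia) x y hj
  rw [← sum_fiberwise_of_maps_to' hmem, sum_insert (by simp; lia), sum_pair (by simp)]
  simp only [sum_const, nsmul_eq_mul]
  rw [hcard _ (by lia), hcard _ (by lia), hcard _ (by lia), add_assoc]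

theorem c_add_a_add_b (h : IsDRG G D p) {i : ℕ} (hi : 1 ≤ i) (hiD : i < D) :
    p i 1 (i - 1) + p i 1 i + p i 1 (i + 1) = p 0 1 1 := by
  classical
  obtain ⟨x, y, hxy⟩ := h.exists_dist_eq_of_le hiD.le
  have hsum := h.sum_neighborFinset_dist_s12 (fun _ ↦ (1 : ℕ)) hxy hi hiD
  simpa [h.degree_eq (hi.trans_lt hiD).pos] using hsum.symm

theorem isStdSeq_of_adjMatrix_mul [DecidableRel G.Adj] (h : IsDRG G D p) (hD : 0 < D) {θ : ℝ}
    {u : ℕ → ℝ} (hu0 : u 0 = 1) (hu : G.adjMatrix ℝ * distMatrix G u = θ • distMatrix G u) :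
    IsStdSeq D p θ u := by
  have hsum (x y : V) :
      ∑ z ∈ G.neighborFinset x, u (G.dist y z) = θ * u (G.dist x y) := by
    have hxy := congrFun₂ hu x y
    rw [SimpleGraph.adjMatrix_mul_apply] at hxy
    simpa only [distMatrix_apply, G.dist_comm (v := y), Matrix.smul_apply, smul_eq_mul] using hxy
  refine ⟨hu0, ?_, fun i hi hiD ↦ ?_⟩
  · obtain ⟨x, -⟩ := h.exists_dist_eq
    have hnbr : ∀ z ∈ G.neighborFinset x, u (G.dist x z) = u 1 := fun z hz ↦ by
      rw [SimpleGraph.dist_eq_one_iff_adj.2 ((G.mem_neighborFinset x z).1 hz)]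
    have hk := hsum x x
    rw [sum_congr rfl hnbr, sum_const, SimpleGraph.card_neighborFinset_eq_degree,
      h.degree_eq hD, SimpleGraph.dist_self, hu0, nsmul_eq_mul, mul_one] at hk
    rw [← hk, mul_div_cancel_left₀ _ (Nat.cast_ne_zero.2 (h.valency_pos hD).ne')]
  · have hiD' : i < D := by lia
    obtain ⟨x, y, hxy⟩ := h.exists_dist_eq_of_le hiD'.le
    rw [← h.sum_neighborFinset_dist_s12 u hxy hi hiD', hsum, hxy]

theorem exists_isStdSeq_posSemidef [DecidableRel G.Adj] (h : IsDRG G D p) (hD : 0 < D) {θ : ℝ}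
    (hθ : IsAdjEigenval G θ) :
    ∃ u, IsStdSeq D p θ u ∧ (distMatrix G u).PosSemidef := by
  obtain ⟨u, hu0, hpsd, hu⟩ := h.exists_posSemidef_distMatrix hθ
  exact ⟨u, h.isStdSeq_of_adjMatrix_mul hD hu0 hu, hpsd⟩

theorem b_one_mul_sub_eq (h : IsDRG G D p) (hD : 1 < D) {θ : ℝ} {u : ℕ → ℝ}
    (hu : IsStdSeq D p θ u) : p 1 1 2 * (u 1 - u 2) = (θ + 1) * (u 0 - u 1) := by
  obtain ⟨hu0, hu1, hrec⟩ := hu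
  have hk : (p 0 1 1 : ℝ) ≠ 0 := Nat.cast_ne_zero.2 (h.valency_pos hD.pos).ne'
  have hθ : p 0 1 1 * u 1 = θ := by rw [hu1, mul_div_cancel₀ _ hk]
  have hsum : (1 : ℝ) + p 1 1 1 + p 1 1 2 = p 0 1 1 := by
    exact_mod_cast h.c_one_eq_one hD.pos ▸ h.c_add_a_add_b le_rfl hD
  have hrec1 : u 0 + p 1 1 1 * u 1 + p 1 1 2 * u 2 = θ * u 1 := by
    simpa [h.c_one_eq_one hD.pos] using hrec 1 le_rfl (by lia)
  linear_combination u 1 * hsum - hrec1 + hθ - θ * hu0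

end IsDRG

theorem IsStdSeq.apply_one_ne_apply_zero {θ : ℝ} {u : ℕ → ℝ} (hu : IsStdSeq D p θ u)
    (hθ : θ ≠ p 0 1 1) : u 1 ≠ u 0 := by
  rw [hu.1, hu.2.1]
  exact fun h ↦ hθ (eq_of_div_eq_one h)

end DistanceRegular

theorem stmt12_general {V α β : Type*} [Fintype V] [Fintype α] [Fintype β] [Nonempty α]
    [Nontrivial β] {G : SimpleGraph V} [DecidableRel G.Adj] {D : ℕ} {p : ℕ → ℕ → ℕ → ℕ}
    (h : IsDRG G D p) {θ : ℝ} (hθ : IsAdjEigenval G θ) (hθk : θ ≠ p 0 1 1)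
    (φ : completeBipartiteGraph α β ↪g G) :
    θ ≤ p 1 1 2 / (2 * Fintype.card α * Fintype.card β / (Fintype.card α + Fintype.card β) - 1)
      - 1 := by
  obtain ⟨a⟩ := ‹Nonempty α›
  obtain ⟨b, b', hb⟩ := exists_pair_ne β
  have hD : 1 < D := (dist_inr_inr φ hb).symm.trans_le (h.dist_le _ _)
  obtain ⟨u, hu, hpsd⟩ := h.exists_isStdSeq_posSemidef hD.pos hθ
  have hlt : 0 < u 0 - u 1 := by
    refine sub_pos.2 (lt_of_le_of_ne ?_ (hu.apply_one_ne_apply_zero hθk))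
    exact dist_inl_inr φ a b ▸ apply_dist_le_of_posSemidef_distMatrix hpsd _ _
  have hquad := two_mul_card_mul_sub_le_of_posSemidef_distMatrix φ hpsd
  have hs : (1 : ℝ) ≤ Fintype.card α := by exact_mod_cast Fintype.card_pos (α := α)
  have ht : (1 : ℝ) < Fintype.card β := by exact_mod_cast Fintype.one_lt_card (α := β)
  set s : ℝ := (Fintype.card α : ℝ)
  set t : ℝ := (Fintype.card β : ℝ)
  set m : ℝ := 2 * s * t / (s + t) - 1 with hm
  have hst : 0 < s + t := by linarith
  have hm0 : 0 < m := by
    rw [hm, sub_pos, one_lt_div hst]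
    nlinarith
  have hm_le : m * (u 1 - u 2) ≤ u 0 - u 1 := by
    rw [hm, sub_mul, div_mul_eq_mul_div, sub_le_iff_le_add, div_le_iff₀ hst]
    linarith
  have hmul : (θ + 1) * m * (u 0 - u 1) ≤ p 1 1 2 * (u 0 - u 1) := calc
    (θ + 1) * m * (u 0 - u 1) = p 1 1 2 * (m * (u 1 - u 2)) := by
      linear_combination -m * h.b_one_mul_sub_eq hD hu
    _ ≤ p 1 1 2 * (u 0 - u 1) := by gcongr
  rw [le_sub_iff_add_le, le_div_iff₀ hm0]
  exact le_of_mul_le_mul_right hmul hlt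

/-- Let `Γ` be a distance-regular graph with `c₁ = 1` and second largest distinct
adjacency eigenvalue `θ₁`. If `Γ` contains an induced `K_{r,r}` with `r ≥ 2`, then
`θ₁ ≤ b₁/(r-1) - 1`. -/
theorem stmt12 {V : Type*} [Fintype V] (G : SimpleGraph V) [DecidableRel G.Adj]
    (D : ℕ) (p : ℕ → ℕ → ℕ → ℕ) (hdrg : IsDRG G D p)
    (hc1 : p 1 1 0 = 1)
    (θ₁ : ℝ) (hθ₁ : IsAdjEigenval G θ₁) (hθ₁k : θ₁ ≠ (p 0 1 1 : ℝ))
    (hθ₁max : ∀ η : ℝ, IsAdjEigenval G η → η ≠ (p 0 1 1 : ℝ) → η ≤ θ₁)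
    (r : ℕ) (hr : 2 ≤ r) (x y : Fin r → V)
    (hxinj : Function.Injective x) (hyinj : Function.Injective y)
    (hxy : ∀ i j : Fin r, x i ≠ y j)
    (hadj : ∀ i j : Fin r, G.Adj (x i) (y j))
    (hxnadj : ∀ i j : Fin r, i ≠ j → ¬ G.Adj (x i) (x j))
    (hynadj : ∀ i j : Fin r, i ≠ j → ¬ G.Adj (y i) (y j)) :
    θ₁ ≤ (p 1 1 2 : ℝ) / ((r : ℝ) - 1) - 1 := by
  have : Nontrivial (Fin r) := Fin.nontrivial_iff_two_le.2 hr
  have hr0 : (r : ℝ) ≠ 0 := by positivity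
  have hmean : (2 * r * r / (r + r) : ℝ) = r := by field_simp; norm_num
  simpa [hmean] using
    stmt12_general hdrg hθ₁ hθ₁k (completeBipartiteEmbedding hxinj hyinj hadj hxnadj hynadj)
end
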